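/- (Geometric claim (3.4) in the proof of Proposition 3.8.) For bounded open convex subsets of ℝ² of unit area, the ratio of minimal width to inradius tends to 2 as the diameter tends to infinity: for every δ > 0 there exists D₀ > 0 such that every nonempty bounded open convex set Ω ⊆ ℝ² with |Ω| = 1 and diam(Ω) ≥ D₀ satisfies 2 ≤ w(Ω)/r(Ω) < 2 + δ. -/

import Mathlib

open MeasureTheory Filter Set Real RealInnerProductSpace

noncomputable section

abbrev E2 : Type := EuclideanSpace ℝ (Fin 2)

/-- The minimal width of a bounded plane set: the infimum over unit directions `ξ` of the
width of the smallest strip orthogonal to `ξ` enclosing the set. -/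
noncomputable def minWidth (Ω : Set E2) : ℝ :=
  sInf { w : ℝ | ∃ ξ : E2, ‖ξ‖ = 1 ∧
    w = sSup { r : ℝ | ∃ x ∈ Ω, r = ⟪x, ξ⟫ } - sInf { r : ℝ | ∃ x ∈ Ω, r = ⟪x, ξ⟫ } }

/-- The inradius of a plane set: the supremum of radii of open balls contained in it. -/
noncomputable def inradius (Ω : Set E2) : ℝ :=
  sSup { ρ : ℝ | 0 < ρ ∧ ∃ x : E2, Metric.ball x ρ ⊆ Ω }

lemma inner_E2 (x y : E2) : ⟪x, y⟫ = x 0 * y 0 + x 1 * y 1 := by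
  simp [PiLp.inner_apply, Fin.sum_univ_two]; ring

lemma normsq_E2 (x : E2) : ‖x‖ ^ 2 = x 0 ^ 2 + x 1 ^ 2 := by
  rw [← real_inner_self_eq_norm_sq, inner_E2]; ring

lemma sep_unit {Ω : Set E2} (hne : Ω.Nonempty) (ho : IsOpen Ω) (hc : Convex ℝ Ω) {y : E2}
    (hy : y ∉ Ω) : ∃ ξ : E2, ‖ξ‖ = 1 ∧ ∀ x ∈ Ω, ⟪x, ξ⟫ < ⟪y, ξ⟫ := by
  obtain ⟨f, hf⟩ := geometric_hahn_banach_open_point hc ho hy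
  set g : E2 := (InnerProductSpace.toDual ℝ E2).symm f with hg
  have hfg : ∀ x, f x = ⟪x, g⟫ := by
    intro x
    rw [real_inner_comm, hg, InnerProductSpace.toDual_symm_apply]
  have hg0 : g ≠ 0 := by
    intro h
    obtain ⟨x, hx⟩ := hne
    have := hf x hx
    rw [hfg, hfg, h] at this
    simp at this
  have hpos : 0 < ‖g‖ := norm_pos_iff.mpr hg0
  refine ⟨(‖g‖)⁻¹ • g, ?_, ?_⟩
  · rw [norm_smul, norm_inv, norm_norm, inv_mul_cancel₀ hpos.ne']
  · intro x hx
    rw [inner_smul_right, inner_smul_right, ← hfg, ← hfg]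
    exact mul_lt_mul_of_pos_left (hf x hx) (inv_pos.mpr hpos)

lemma bdd_inner {Ω : Set E2} (hb : Bornology.IsBounded Ω) {ξ : E2} (hξ : ‖ξ‖ = 1) :
    BddAbove { r : ℝ | ∃ x ∈ Ω, r = ⟪x, ξ⟫ } ∧ BddBelow { r : ℝ | ∃ x ∈ Ω, r = ⟪x, ξ⟫ } := by
  obtain ⟨C, hC⟩ := hb.exists_norm_le
  have key : ∀ x ∈ Ω, |⟪x, ξ⟫| ≤ C := by
    intro x hx
    have := abs_real_inner_le_norm x ξ
    rw [hξ, mul_one] at this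
    exact this.trans (hC x hx)
  constructor
  · refine ⟨C, ?_⟩
    rintro r ⟨x, hx, rfl⟩
    exact (abs_le.mp (key x hx)).2
  · refine ⟨-C, ?_⟩
    rintro r ⟨x, hx, rfl⟩
    exact (abs_le.mp (key x hx)).1

open scoped Pointwise in
lemma chord {Ω : Set E2} (hne : Ω.Nonempty) (ho : IsOpen Ω) (hb : Bornology.IsBounded Ω)
    (hc : Convex ℝ Ω) {v : E2} (hv : ‖v‖ < minWidth Ω) : ∃ a ∈ Ω, ∃ b ∈ Ω, a - b = v := by
  by_contra hcon
  have hv' : v ∉ Ω - Ω := by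
    intro h
    obtain ⟨a, ha, b, hb, h⟩ := Set.mem_sub.mp h
    exact hcon ⟨a, ha, b, hb, h⟩
  obtain ⟨ξ, hξ, h⟩ := sep_unit (hne.sub hne) (ho.sub_right) (hc.sub hc) hv'
  have hvξ : ⟪v, ξ⟫ ≤ ‖v‖ := by
    have := real_inner_le_norm v ξ
    rwa [hξ, mul_one] at this
  obtain ⟨x0, hx0⟩ := hne
  have hle : sSup { r : ℝ | ∃ x ∈ Ω, r = ⟪x, ξ⟫ } ≤
      ‖v‖ + sInf { r : ℝ | ∃ x ∈ Ω, r = ⟪x, ξ⟫ } := by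
    refine csSup_le ⟨_, x0, hx0, rfl⟩ ?_
    rintro r ⟨x, hx, rfl⟩
    have : ⟪x, ξ⟫ - ‖v‖ ≤ sInf { r : ℝ | ∃ x ∈ Ω, r = ⟪x, ξ⟫ } := by
      refine le_csInf ⟨_, x0, hx0, rfl⟩ ?_
      rintro r ⟨y, hy, rfl⟩
      have h1 := h (x - y) (Set.sub_mem_sub hx hy)
      rw [inner_sub_left] at h1
      linarith
    linarith
  have hw : minWidth Ω ≤ sSup { r : ℝ | ∃ x ∈ Ω, r = ⟪x, ξ⟫ } -
      sInf { r : ℝ | ∃ x ∈ Ω, r = ⟪x, ξ⟫ } := by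
    refine csInf_le ⟨0, ?_⟩ ⟨ξ, hξ, rfl⟩
    rintro w ⟨ζ, hζ, rfl⟩
    have := bdd_inner hb hζ
    have := Real.sInf_le_sSup _ this.2 this.1
    linarith
  linarith

lemma two_mul_le_width {Ω : Set E2} (hb : Bornology.IsBounded Ω) {c : E2} {ρ : ℝ} (hρ : 0 < ρ)
    (h : Metric.ball c ρ ⊆ Ω) : 2 * ρ ≤ minWidth Ω := by
  refine le_csInf ⟨_, EuclideanSpace.single 0 1, by simp, rfl⟩ ?_
  rintro w ⟨ξ, hξ, rfl⟩
  obtain ⟨hA, hB⟩ := bdd_inner hb hξ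
  have hs : ⟪ξ, ξ⟫ = 1 := by rw [real_inner_self_eq_norm_sq, hξ]; norm_num
  refine le_of_forall_lt fun s hs' => ?_
  obtain ⟨σ, h1, h2⟩ := exists_between (max_lt (show s / 2 < ρ by linarith) hρ)
  have h3 := (max_lt_iff.mp h1).1
  have h4 := (max_lt_iff.mp h1).2
  have m1 : c + σ • ξ ∈ Ω := h (by simp [norm_smul, hξ, abs_of_pos h4, h2])
  have m2 : c - σ • ξ ∈ Ω := h (by simp [norm_smul, hξ, abs_of_pos h4, h2, sub_eq_add_neg])
  have u1 := le_csSup hA ⟨_, m1, rfl⟩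
  have u2 := csInf_le hB ⟨_, m2, rfl⟩
  rw [inner_add_left, inner_smul_left, hs] at u1
  rw [inner_sub_left, inner_smul_left, hs] at u2
  simp at u1 u2
  linarith

lemma area_bound {Ω : Set E2} (hc : Convex ℝ Ω) (hv : (volume Ω).toReal = 1) {p q z : E2}
    (hp : p ∈ Ω) (hq : q ∈ Ω) (hz : z ∈ Ω) :
    |(q - p) 0 * (z - p) 1 - (q - p) 1 * (z - p) 0| ≤ 4 := by
  let v : Fin 2 → E2 := ![(1/2 : ℝ) • (q - p), (1/2 : ℝ) • (z - p)]
  have hsub : (fun x => p + x) '' parallelepiped v ⊆ Ω := by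
    rintro _ ⟨x, hx, rfl⟩
    rw [mem_parallelepiped_iff] at hx
    obtain ⟨t, ht, rfl⟩ := hx
    have a0 := ht.1 0
    have a1 := ht.1 1
    have b0 := ht.2 0
    have b1 := ht.2 1
    simp only [Pi.zero_apply, Pi.one_apply] at a0 a1 b0 b1
    have := hc.sum_mem (t := Finset.univ) (w := ![1 - t 0 / 2 - t 1 / 2, t 0 / 2, t 1 / 2])
      (z := ![p, q, z]) (by
        intro i _
        fin_cases i <;> simp <;> linarith) (by simp [Fin.sum_univ_three]; ring)
      (by intro i _; fin_cases i <;> simp [hp, hq, hz])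
    convert this using 1
    simp only [Fin.sum_univ_three, Fin.sum_univ_two, v]
    simp
    module
  have hvol := measure_mono (μ := volume) hsub
  rw [Set.image_add_left, measure_preimage_add] at hvol
  rw [← (EuclideanSpace.basisFun (Fin 2) ℝ).addHaar_eq_volume,
    Measure.addHaar_parallelepiped, OrthonormalBasis.addHaar_eq_volume] at hvol
  have h1 : volume Ω = 1 := by
    rw [← ENNReal.toReal_eq_one_iff]; exact hv
  rw [h1, ENNReal.ofReal_le_one] at hvol
  have hd : (EuclideanSpace.basisFun (Fin 2) ℝ).toBasis.det v =
      ((q - p) 0 * (z - p) 1 - (q - p) 1 * (z - p) 0) / 4 := by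
    rw [Module.Basis.det_apply, Matrix.det_fin_two]
    simp [Module.Basis.toMatrix_apply, v]
    ring
  rw [hd, abs_div, abs_of_pos (show (0:ℝ) < 4 by norm_num)] at hvol
  linarith

lemma scalar_contra {t κ ρ α β s X Y m : ℝ} (ht : 0 < t) (ht2 : t ≤ 2) (hκ : 0 < κ) (hκ1 : κ < 1)
    (hρ : ρ = t * (1 - κ) ^ 2 / 2) (hY : |Y| ≤ 1) (hX : 2 / κ + 1 ≤ κ * |X|)
    (h1 : m + t / 2 * β < m + κ * s + ρ) (h2 : m - t / 2 * β < m + κ * s + ρ)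
    (h3 : m + s < m + κ * s + ρ) (hαβ : α ^ 2 + β ^ 2 = 1) (hsd : s = X * α + Y * β) : False := by
  have hρ0 : 0 < ρ := by rw [hρ]; have : 0 < 1 - κ := by linarith
                         positivity
  have hβt : t / 2 * |β| < ρ + κ * s := by
    rcases abs_cases β with ⟨e, _⟩ | ⟨e, _⟩ <;> rw [e] <;> linarith
  have hs1 : (1 - κ) * s < ρ := by linarith
  have h1κ : 0 < 1 - κ := by linarith
  have hρt : ρ < t := by
    have : (1 - κ) ^ 2 < 1 := by nlinarith
    have := mul_lt_mul_of_pos_left this ht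
    rw [hρ]; linarith
  have hβ1 : |β| < 1 - κ := by
    have e1 : (1 - κ) * (t / 2 * |β|) < (1 - κ) * (ρ + κ * s) := by gcongr
    have e2 : (1 - κ) * (ρ + κ * s) ≤ ρ := by
      have e6 := mul_lt_mul_of_pos_left hs1 hκ
      linarith
    have e3 : (1 - κ) * (t / 2) * |β| < (1 - κ) * (t / 2) * (1 - κ) := by
      
      have e4 : (1 - κ) * (t / 2) * (1 - κ) = ρ := by rw [hρ]; ring
      linarith
    exact lt_of_mul_lt_mul_left e3 (by positivity)
  have hα1 : κ < |α| := by
    apply lt_of_pow_lt_pow_left₀ 2 (abs_nonneg _)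
    have : |β| ^ 2 < (1 - κ) ^ 2 := by gcongr
    rw [sq_abs] at this ⊢
    nlinarith
  have hs2 : |s| < t / κ := by
    rw [lt_div_iff₀ hκ]
    rcases abs_cases s with ⟨e, h0⟩ | ⟨e, h0⟩ <;> rw [e]
    · have : (1 - κ) * (s * κ) < (1 - κ) * t := by
        have : ρ * κ ≤ (1 - κ) * t := by
          rw [hρ]
          have : (1 - κ) * κ / 2 ≤ 1 := by nlinarith
          have := mul_le_mul_of_nonneg_left this (mul_pos ht h1κ).le
          linarith
        have e5 := mul_lt_mul_of_pos_right hs1 hκ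
        linarith
      exact lt_of_mul_lt_mul_left this h1κ.le
    · have : 0 ≤ t / 2 * |β| := by positivity
      linarith
  have hs3 : |X| * |α| ≤ |s| + 1 := by
    rw [← abs_mul]
    have e : X * α = s - Y * β := by rw [hsd]; ring
    rw [e]
    refine (abs_sub _ _).trans ?_
    rw [abs_mul]
    have : |Y| * |β| ≤ 1 * 1 := by
      gcongr
      linarith
    linarith
  have hXpos : κ * |X| ≤ |X| * |α| := by
    rw [mul_comm]; gcongr
  have : t / κ ≤ 2 / κ := by gcongr
  linarith

lemma ball_sub_of_triangle {Ω : Set E2} (ho : IsOpen Ω) (hc : Convex ℝ Ω) {a b z u n : E2}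
    (ha : a ∈ Ω) (hb : b ∈ Ω) (hz : z ∈ Ω) (hu : u 0 ^ 2 + u 1 ^ 2 = 1) (hn0 : n 0 = -u 1)
    (hn1 : n 1 = u 0) {t κ : ℝ} (ht : 0 < t) (ht2 : t ≤ 2) (hκ : 0 < κ) (hκ1 : κ < 1)
    (hab : a - b = t • n)
    (hY : |⟪z - (1/2 : ℝ) • (a + b), n⟫| ≤ 1)
    (hX : 2 / κ + 1 ≤ κ * |⟪z - (1/2 : ℝ) • (a + b), u⟫|) :
    ∃ c, Metric.ball c (t * (1 - κ) ^ 2 / 2) ⊆ Ω := by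
  set m : E2 := (1/2 : ℝ) • (a + b) with hm
  have ham : a = m + (t / 2) • n := by
    have : a = b + t • n := by rw [← hab]; abel
    rw [hm, this]; module
  have hbm : b = m - (t / 2) • n := by
    have : a = b + t • n := by rw [← hab]; abel
    rw [hm, this]; module
  refine ⟨m + κ • (z - m), fun y hy => ?_⟩
  by_contra hyΩ
  obtain ⟨ξ, hξ, h⟩ := sep_unit ⟨a, ha⟩ ho hc hyΩ
  set ρ := t * (1 - κ) ^ 2 / 2 with hρ
  have hyc : ⟪y, ξ⟫ < ⟪m + κ • (z - m), ξ⟫ + ρ := by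
    have h1 := real_inner_le_norm (y - (m + κ • (z - m))) ξ
    rw [hξ, mul_one, inner_sub_left] at h1
    rw [Metric.mem_ball, dist_eq_norm] at hy
    linarith
  have h1 := (h a ha).trans hyc
  have h2 := (h b hb).trans hyc
  have h3 := (h z hz).trans hyc
  have hzm : z = m + (z - m) := by abel
  rw [ham] at h1
  rw [hbm] at h2
  rw [hzm] at h3
  simp only [add_sub_cancel_left] at h3
  set d := z - m with hd
  simp only [inner_add_left, inner_sub_left, inner_smul_left, conj_trivial] at h1 h2 h3
  set α := ⟪u, ξ⟫ with hα
  set β := ⟪n, ξ⟫ with hβ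
  set s := ⟪d, ξ⟫ with hs
  have hαβ : α ^ 2 + β ^ 2 = 1 := by
    have := normsq_E2 ξ
    rw [hξ] at this
    rw [hα, hβ, inner_E2, inner_E2, hn0, hn1]
    linear_combination (ξ 0 ^ 2 + ξ 1 ^ 2) * hu - this
  have hsd : s = ⟪d, u⟫ * α + ⟪d, n⟫ * β := by
    rw [hs, hα, hβ]
    simp only [inner_E2, hn0, hn1]
    linear_combination -(d 0 * ξ 0 + d 1 * ξ 1) * hu
  exact scalar_contra ht ht2 hκ hκ1 hρ hY hX h1 h2 h3 hαβ hsd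

/-- For bounded open convex plane sets of unit area, the ratio of minimal width to inradius
tends to `2` as the diameter tends to infinity. -/
theorem width_inradius_ratio_tendsto_two (δ : ℝ) (hδ : 0 < δ) :
    ∃ D₀ : ℝ, 0 < D₀ ∧ ∀ Ω : Set E2, Ω.Nonempty → IsOpen Ω → Bornology.IsBounded Ω →
      Convex ℝ Ω → (volume Ω).toReal = 1 → D₀ ≤ Metric.diam Ω →
      2 ≤ minWidth Ω / inradius Ω ∧ minWidth Ω / inradius Ω < 2 + δ := by
  obtain ⟨κ, hκ, hκ1, hκδ⟩ : ∃ κ : ℝ, 0 < κ ∧ κ < 1 ∧ 3 * κ * (2 + δ) < δ := by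
    refine ⟨δ / (12 + 12 * δ), by positivity, ?_, ?_⟩
    · rw [div_lt_one (by positivity)]; linarith
    · rw [← mul_div_assoc, div_mul_eq_mul_div, div_lt_iff₀ (by positivity)]
      nlinarith
  refine ⟨4 * ((2 / κ + 1) / κ), by positivity, ?_⟩
  intro Ω hne ho hb hc hv hD
  have h1κ : 0 < 1 - κ := by linarith
  have hbdd : BddAbove { ρ : ℝ | 0 < ρ ∧ ∃ x : E2, Metric.ball x ρ ⊆ Ω } := by
    refine ⟨minWidth Ω / 2, ?_⟩
    rintro ρ ⟨hρ, x, hx⟩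
    have := two_mul_le_width hb hρ hx
    linarith
  obtain ⟨x0, hx0⟩ := hne
  obtain ⟨ρ0, hρ0, hball0⟩ := Metric.isOpen_iff.mp ho x0 hx0
  have hr0 : ρ0 ≤ inradius Ω := le_csSup hbdd ⟨hρ0, x0, hball0⟩
  have hr : 0 < inradius Ω := lt_of_lt_of_le hρ0 hr0
  have h2r : inradius Ω ≤ minWidth Ω / 2 := by
    refine csSup_le ⟨ρ0, hρ0, x0, hball0⟩ ?_
    rintro ρ ⟨hρ, x, hx⟩
    have := two_mul_le_width hb hρ hx
    linarith
  have hw : 0 < minWidth Ω := by linarith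
  constructor
  · rw [le_div_iff₀ hr]; linarith
  rw [div_lt_iff₀ hr]
  -- two far apart points
  have hK : 2 ≤ (2 / κ + 1) / κ := by
    rw [le_div_iff₀ hκ]
    have : 0 < 2 / κ := by positivity
    have : 2 ≤ 2 / κ := by rw [le_div_iff₀ hκ]; linarith
    linarith
  obtain ⟨p, hp, q, hq, hpq⟩ : ∃ p ∈ Ω, ∃ q ∈ Ω, 2 * ((2 / κ + 1) / κ) ≤ dist p q := by
    by_contra! hcon
    have := Metric.diam_le_of_forall_dist_le (by positivity) (fun x hx y hy => (hcon x hx y hy).le)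
    linarith
  set L := dist p q with hL
  have hL4 : 4 ≤ L := by linarith
  have hL0 : 0 < L := by linarith
  have hLsq : (q - p) 0 ^ 2 + (q - p) 1 ^ 2 = L ^ 2 := by
    rw [← normsq_E2, hL, dist_comm, dist_eq_norm]
  set u : E2 := !₂[(q - p) 0 / L, (q - p) 1 / L] with hudef
  set n : E2 := !₂[-((q - p) 1 / L), (q - p) 0 / L] with hndef
  have u0 : u 0 = (q - p) 0 / L := by simp [hudef]
  have u1 : u 1 = (q - p) 1 / L := by simp [hudef]
  have n0 : n 0 = -u 1 := by simp [hudef, hndef]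
  have n1 : n 1 = u 0 := by simp [hudef, hndef]
  have hu : u 0 ^ 2 + u 1 ^ 2 = 1 := by
    rw [u0, u1, div_pow, div_pow, ← add_div, hLsq, div_self (by positivity)]
  have hnn : ‖n‖ = 1 := by
    have : ‖n‖ ^ 2 = 1 := by rw [normsq_E2, n0, n1]; linarith
    nlinarith [norm_nonneg n]
  have hH : ∀ z ∈ Ω, |⟪z - p, n⟫| ≤ 1 := by
    intro z hz
    have := area_bound hc hv hp hq hz
    have e : ⟪z - p, n⟫ = ((q - p) 0 * (z - p) 1 - (q - p) 1 * (z - p) 0) / L := by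
      rw [inner_E2, n0, n1, u0, u1]; ring
    rw [e, abs_div, abs_of_pos hL0, div_le_one hL0]
    linarith
  have hH1 : ∀ z ∈ Ω, |⟪z - q, n⟫| ≤ 1 := by
    intro z hz
    have e : ⟪z - q, n⟫ = ⟪z - p, n⟫ := by
      have : ⟪z - q, n⟫ - ⟪z - p, n⟫ = 0 := by
        simp only [inner_E2, n0, n1, u0, u1, PiLp.sub_apply]; ring
      linarith
    rw [e]; exact hH z hz
  set t := (1 - κ) * minWidth Ω with ht
  have ht0 : 0 < t := by positivity
  obtain ⟨a, ha, b, hb', hab⟩ := chord ⟨x0, hx0⟩ ho hb hc (v := t • n) (by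
    rw [norm_smul, hnn, mul_one, Real.norm_of_nonneg ht0.le, ht]; nlinarith)
  have ht2 : t ≤ 2 := by
    have e : ⟪a - p, n⟫ - ⟪b - p, n⟫ = t := by
      rw [← inner_sub_left, sub_sub_sub_cancel_right, hab, inner_smul_left,
        real_inner_self_eq_norm_sq, hnn]; simp
    have := abs_le.mp (hH a ha)
    have := abs_le.mp (hH b hb')
    linarith
  set m : E2 := (1/2 : ℝ) • (a + b) with hm
  have hmΩ : m ∈ Ω := by
    have := hc ha hb' (a := 1/2) (b := 1/2) (by norm_num) (by norm_num) (by norm_num)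
    rwa [← smul_add] at this
  have hLu : ⟪q - m, u⟫ - ⟪p - m, u⟫ = L := by
    rw [← inner_sub_left, sub_sub_sub_cancel_right, inner_E2, u0, u1]
    field_simp
    linarith
  have hfin : ∃ z ∈ Ω, |⟪z - m, n⟫| ≤ 1 ∧ 2 / κ + 1 ≤ κ * |⟪z - m, u⟫| := by
    have key : ∀ X : ℝ, L / 2 ≤ X → 2 / κ + 1 ≤ κ * X := by
      intro X hX
      have : (2 / κ + 1) / κ ≤ X := by linarith
      rw [div_le_iff₀ hκ] at this
      linarith
    rcases le_total (L / 2) ⟪q - m, u⟫ with h | h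
    · refine ⟨q, hq, ?_, key _ (h.trans (le_abs_self _))⟩
      rw [← neg_sub, inner_neg_left, abs_neg]; exact hH1 m hmΩ
    · refine ⟨p, hp, ?_, key _ (le_trans ?_ (neg_le_abs _))⟩
      · rw [← neg_sub, inner_neg_left, abs_neg]; exact hH m hmΩ
      · linarith
  obtain ⟨z, hz, hzY, hzX⟩ := hfin
  obtain ⟨c, hcb⟩ := ball_sub_of_triangle ho hc ha hb' hz hu n0 n1 ht0 ht2 hκ hκ1 hab hzY hzX
  have hfr : t * (1 - κ) ^ 2 / 2 ≤ inradius Ω := le_csSup hbdd ⟨by positivity, c, hcb⟩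
  have hcube : 1 - 3 * κ ≤ (1 - κ) ^ 3 := by nlinarith [mul_pos hκ hκ, mul_pos (mul_pos hκ hκ) h1κ]
  have e1 : minWidth Ω * (1 - 3 * κ) / 2 ≤ inradius Ω := by
    refine le_trans ?_ hfr
    rw [ht]
    have := mul_le_mul_of_nonneg_left hcube hw.le
    linarith
  have e2 : (2 + δ) * (minWidth Ω * (1 - 3 * κ) / 2) ≤ (2 + δ) * inradius Ω := by gcongr
  have e3 : minWidth Ω * 2 < minWidth Ω * ((2 + δ) * (1 - 3 * κ)) := by
    apply mul_lt_mul_of_pos_left _ hw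
    linarith
  linarith
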